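/- arXiv:1303.5333 — 3 statements merged into one kernel-verified Lean document; each statement's English description precedes it below -/
import Mathlib

section
/- Let Z be a unique factorization domain whose group of units Zˣ is finite, with field of fractions Q, and let f ∈ Z[X] be a nonconstant polynomial, irreducible in Z[X], with nonzero constant coefficient. If the image of f in Q[X] does not divide the k-th cyclotomic polynomial over Q (Polynomial.cyclotomic k Q) for any integer k ≥ 1, then the set of prime numbers p such that f(X^p) is not irreducible in Z[X] is finite. -/
open Polynomial
open scoped HahnSeries IntermediateField

/-!
Let `a` be a root of `f` and `K = Q(a)`. For a prime `p`, reducibility of `f(X ^ p)` forces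
`a = b ^ p` for some `b ∈ K`, so it suffices that an element of `K` which is neither zero nor a
root of unity is a `p`-th power for finitely many `p` only.

An iterated Frobenius moves `a` into the separable closure of `Q` in `K`, so take `K` separable. If
`b ^ p = a`, then the primitive minimal polynomial of `b ^ j` divides `h (X ^ p)`, where `h` is that
of `a ^ j`. Comparing values at `1` and leading coefficients leaves finitely many possibilities for
the norm of `1 - b ^ j`, uniformly in `p`. If there were infinitely many `p`, two of them, `p ≠ q`,
would have `p`-th and `q`-th roots `b`, `c` of `a` such that `1 - b ^ j` and `1 - c ^ j` have the
same norm for all `j` up to any prescribed bound. By a Vandermonde argument the products of the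
`1 - [σ b]` and of the `1 - [σ c]` over the embeddings `σ` then agree in the group algebra. A
homomorphism from the multiplicative group to `ℚ` turns this into an identity between generalized
polynomials with rational exponents, whose lowest exponents are in the ratio `q : p`, so `p = q`.
-/

section GroupAlgebra

variable {ι R G : Type*} [CommRing R]

theorem card_support_prod_one_sub_single_le [CommMonoid G] (s : Finset ι) (b : ι → G) :
    (∏ i ∈ s, (1 - MonoidAlgebra.single (b i) 1 : MonoidAlgebra R G)).coeff.support.card ≤
      2 ^ s.card := by
  classical
  have hfactor (g : G) :
      (1 - MonoidAlgebra.single g 1 : MonoidAlgebra R G).coeff.support.card ≤ 2 := by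
    have hsub : (1 - MonoidAlgebra.single g 1 : MonoidAlgebra R G).coeff.support ⊆ {1, g} := by
      rw [MonoidAlgebra.coeff_sub]
      exact Finsupp.support_sub.trans <| Finset.union_subset_union
        MonoidAlgebra.support_coeff_one_subset Finsupp.support_single_subset
    exact (Finset.card_le_card hsub).trans Finset.card_le_two
  induction s using Finset.cons_induction with
  | empty => simpa using Finset.card_le_card MonoidAlgebra.support_coeff_one_subset
  | cons i s hi ih =>
    rw [Finset.prod_cons, Finset.card_cons, pow_succ']
    calc
      _ ≤ _ := Finset.card_le_card (MonoidAlgebra.support_coeff_mul_subset _ _)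
      _ ≤ _ := Finset.card_mul_le
      _ ≤ 2 * 2 ^ s.card := Nat.mul_le_mul (hfactor _) ih

theorem eq_zero_of_forall_lift_pow_eq_zero [IsDomain R] [Monoid G] {χ : G →* R}
    (hχ : Function.Injective χ) {x : MonoidAlgebra R G}
    (hx : ∀ j < x.coeff.support.card, MonoidAlgebra.lift R R G (χ ^ j) x = 0) : x = 0 := by
  let e := x.coeff.support.equivFin.symm
  have hcoeff : (fun k ↦ x.coeff (e k)) = 0 := by
    refine Matrix.eq_zero_of_forall_pow_sum_mul_pow_eq_zero (f := fun k ↦ χ (e k))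
      (hχ.comp (Subtype.val_injective.comp e.injective)) fun j ↦ ?_
    rw [← hx j j.2, MonoidAlgebra.lift_apply, Finsupp.sum,
      ← Finset.sum_coe_sort x.coeff.support]
    exact e.sum_comp fun g ↦ x.coeff g * χ g ^ (j : ℕ)
  ext g
  by_contra hg
  exact hg (by simpa using congrFun hcoeff (e.symm ⟨g, Finsupp.mem_support_iff.2 hg⟩))

theorem prod_one_sub_single_eq_of_forall_prod_one_sub_pow_eq [Fintype ι] [IsDomain R]
    [CommMonoid G] {χ : G →* R} (hχ : Function.Injective χ) {b c : ι → G}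
    (h : ∀ j < 2 ^ (Fintype.card ι + 1), ∏ i, (1 - χ (b i) ^ j) = ∏ i, (1 - χ (c i) ^ j)) :
    ∏ i, (1 - MonoidAlgebra.single (b i) 1 : MonoidAlgebra R G) =
      ∏ i, (1 - MonoidAlgebra.single (c i) 1) := by
  classical
  refine sub_eq_zero.1 (eq_zero_of_forall_lift_pow_eq_zero hχ fun j hj ↦ ?_)
  have hj' : j < 2 ^ (Fintype.card ι + 1) := by
    rw [MonoidAlgebra.coeff_sub] at hj
    calc
      j < _ := hj
      _ ≤ _ := Finset.card_le_card Finsupp.support_sub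
      _ ≤ _ := Finset.card_union_le _ _
      _ ≤ 2 ^ Fintype.card ι + 2 ^ Fintype.card ι :=
        add_le_add (card_support_prod_one_sub_single_le _ b)
          (card_support_prod_one_sub_single_le _ c)
      _ = 2 ^ (Fintype.card ι + 1) := by ring
  simpa [sub_eq_zero] using h j hj'

end GroupAlgebra

theorem order_one_sub_single {Γ R : Type*} [Zero Γ] [LinearOrder Γ] [Ring R] [Nontrivial R]
    (r : Γ) : (1 - HahnSeries.single r 1 : R⟦Γ⟧).order = min 0 r := by
  rcases eq_or_ne r 0 with rfl | hr
  · simp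
  have hcoeff_zero : (1 - HahnSeries.single r 1 : R⟦Γ⟧).coeff 0 ≠ 0 := by
    simp [HahnSeries.coeff_one, HahnSeries.coeff_single_of_ne hr.symm]
  have hcoeff_r : (1 - HahnSeries.single r 1 : R⟦Γ⟧).coeff r ≠ 0 := by
    simp [HahnSeries.coeff_one, hr]
  refine le_antisymm (le_min (HahnSeries.order_le_of_coeff_ne_zero hcoeff_zero)
    (HahnSeries.order_le_of_coeff_ne_zero hcoeff_r)) ?_
  have hne : (1 - HahnSeries.single r 1 : R⟦Γ⟧) ≠ 0 := HahnSeries.ne_zero_of_coeff_ne_zero hcoeff_r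
  simpa [sub_eq_add_neg, HahnSeries.order_single] using
    HahnSeries.min_order_le_order_add (x := (1 : R⟦Γ⟧)) (y := -HahnSeries.single r 1)
      (by rwa [← sub_eq_add_neg])

section HahnSeries

variable {Γ R : Type*} [AddCommMonoid Γ] [LinearOrder Γ] [IsOrderedCancelAddMonoid Γ]

theorem order_prod {ι : Type*} [CommRing R] [IsDomain R] (s : Finset ι) (x : ι → R⟦Γ⟧)
    (hx : ∀ i ∈ s, x i ≠ 0) : (∏ i ∈ s, x i).order = ∑ i ∈ s, (x i).order := by
  induction s using Finset.cons_induction with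
  | empty => simp
  | cons i s hi ih =>
    rw [Finset.forall_mem_cons] at hx
    rw [Finset.prod_cons, Finset.sum_cons, HahnSeries.order_mul hx.1
      (Finset.prod_ne_zero_iff.2 hx.2), ih hx.2]

/-- The character of `G` with values in Hahn series induced by an additive map `φ : G → Γ`, sending
`g` to the monomial with exponent `φ g`. Lifting it to the group algebra is how an identity there is
tested on exponents in `Γ`. -/
noncomputable def monomialHom {G : Type*} [Monoid G] (R : Type*) [Semiring R]
    (φ : Additive G →+ Γ) : G →* R⟦Γ⟧ where
  toFun g := HahnSeries.single (φ (.ofMul g)) 1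
  map_one' := by simp
  map_mul' g h := by simp

end HahnSeries

theorem exists_addMonoidHom_rat_forall_ne_zero {A ι : Type*} [AddCommGroup A] [Finite ι] {a : ι → A}
    (ha : ∀ i, ¬ IsOfFinAddOrder (a i)) : ∃ φ : A →+ ℚ, ∀ i, φ (a i) ≠ 0 := by
  have hne (i : ι) : TensorProduct.mk ℤ ℚ A 1 (a i) ≠ 0 := by
    rw [Ne, IsLocalizedModule.eq_zero_iff (nonZeroDivisors ℤ)]
    rintro ⟨n, hn⟩
    exact ha i (isOfFinAddOrder_iff_zsmul_eq_zero.2 ⟨n, nonZeroDivisors.coe_ne_zero n, hn⟩)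
  obtain ⟨ψ, hψ⟩ := Module.exists_dual_forall_apply_ne_zero (K := ℚ) _ hne
  exact ⟨ψ.toAddMonoidHom.comp (TensorProduct.mk ℤ ℚ A 1).toAddMonoidHom, hψ⟩

theorem exists_addMonoidHom_rat_forall_ne_zero_and_exists_neg {A ι : Type*} [AddCommGroup A]
    [Finite ι] [Nonempty ι] {a : ι → A} (ha : ∀ i, ¬ IsOfFinAddOrder (a i)) :
    ∃ φ : A →+ ℚ, (∀ i, φ (a i) ≠ 0) ∧ ∃ i, φ (a i) < 0 := by
  obtain ⟨φ, hφ⟩ := exists_addMonoidHom_rat_forall_ne_zero ha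
  obtain ⟨i⟩ := ‹Nonempty ι›
  rcases (hφ i).lt_or_gt with hneg | hpos
  · exact ⟨φ, hφ, i, hneg⟩
  · exact ⟨-φ, fun k ↦ neg_ne_zero.2 (hφ k), i, neg_neg_of_pos hpos⟩

section Exponents

variable {ι R G : Type*} [Fintype ι] [CommRing R] [IsDomain R] [CommGroup G]

theorem sum_min_zero_eq_of_prod_one_sub_single_eq {Γ : Type*} [AddCommGroup Γ] [LinearOrder Γ]
    [IsOrderedAddMonoid Γ] (φ : Additive G →+ Γ) {b c : ι → G} (hφ : ∀ i, φ (.ofMul (b i)) ≠ 0)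
    (h : ∏ i, (1 - MonoidAlgebra.single (b i) 1 : MonoidAlgebra R G) =
      ∏ i, (1 - MonoidAlgebra.single (c i) 1)) :
    ∑ i, min 0 (φ (.ofMul (b i))) = ∑ i, min 0 (φ (.ofMul (c i))) := by
  have hseries : ∏ i, (1 - HahnSeries.single (φ (.ofMul (b i))) 1 : R⟦Γ⟧) =
      ∏ i, (1 - HahnSeries.single (φ (.ofMul (c i))) 1) := by
    simpa [monomialHom] using congrArg (MonoidAlgebra.lift R _ G (monomialHom R φ)) h
  have hb : ∀ i ∈ Finset.univ, (1 - HahnSeries.single (φ (.ofMul (b i))) 1 : R⟦Γ⟧) ≠ 0 := by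
    intro i _ hzero
    have := congrArg (HahnSeries.coeff · 0) hzero
    simp [HahnSeries.coeff_one, HahnSeries.coeff_single_of_ne (hφ i).symm] at this
  have hc : ∀ i ∈ Finset.univ, (1 - HahnSeries.single (φ (.ofMul (c i))) 1 : R⟦Γ⟧) ≠ 0 :=
    Finset.prod_ne_zero_iff.1 (hseries ▸ Finset.prod_ne_zero_iff.2 hb)
  simpa only [order_prod _ _ hb, order_prod _ _ hc, order_one_sub_single] using
    congrArg HahnSeries.order hseries

theorem eq_of_prod_one_sub_single_eq_of_pow_eq_pow [Nonempty ι] {b c : ι → G} {p q : ℕ}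
    (hb : ∀ i, ¬ IsOfFinOrder (b i)) (hbc : ∀ i, b i ^ p = c i ^ q)
    (h : ∏ i, (1 - MonoidAlgebra.single (b i) 1 : MonoidAlgebra R G) =
      ∏ i, (1 - MonoidAlgebra.single (c i) 1)) : p = q := by
  obtain ⟨φ, hφ, k, hk⟩ := exists_addMonoidHom_rat_forall_ne_zero_and_exists_neg
    (a := fun i ↦ Additive.ofMul (b i)) (fun i ↦ by rw [isOfFinAddOrder_ofMul_iff]; exact hb i)
  have hφbc (i : ι) : p * φ (.ofMul (b i)) = q * φ (.ofMul (c i)) := by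
    simpa using congrArg (fun g ↦ φ (.ofMul g)) (hbc i)
  have hneg : ∑ i, min 0 (φ (.ofMul (b i))) < 0 :=
    Finset.sum_neg' (fun i _ ↦ min_le_left _ _) ⟨k, Finset.mem_univ k, min_lt_of_right_lt hk⟩
  have hscale : p * ∑ i, min 0 (φ (.ofMul (b i))) = q * ∑ i, min 0 (φ (.ofMul (b i))) :=
    calc
      _ = ∑ i, min 0 (p * φ (.ofMul (b i))) := by
        simp [Finset.mul_sum, mul_min_of_nonneg]
      _ = ∑ i, min 0 (q * φ (.ofMul (c i))) := by simp only [hφbc]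
      _ = q * ∑ i, min 0 (φ (.ofMul (c i))) := by
        simp [Finset.mul_sum, mul_min_of_nonneg]
      _ = _ := by rw [sum_min_zero_eq_of_prod_one_sub_single_eq φ hφ h]
  exact_mod_cast mul_right_cancel₀ hneg.ne hscale

end Exponents

theorem eq_of_norm_one_sub_pow_eq {K L : Type*} [Field K] [Field L] [Algebra K L]
    [FiniteDimensional K L] [Algebra.IsSeparable K L] {b c : Lˣ} {p q : ℕ}
    (hb : ¬ IsOfFinOrder b) (hbc : b ^ p = c ^ q)
    (h : ∀ j < 2 ^ (Module.finrank K L + 1),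
      Algebra.norm K (1 - (b : L) ^ j) = Algebra.norm K (1 - (c : L) ^ j)) : p = q := by
  let Ω := AlgebraicClosure K
  have : Nonempty (L →ₐ[K] Ω) := ⟨IsAlgClosed.lift⟩
  refine eq_of_prod_one_sub_single_eq_of_pow_eq_pow (R := Ω)
    (b := fun σ : L →ₐ[K] Ω ↦ Units.map σ b) (c := fun σ ↦ Units.map σ c) (fun σ ↦ ?_)
    (fun σ ↦ by rw [← map_pow, hbc, map_pow])
    (prod_one_sub_single_eq_of_forall_prod_one_sub_pow_eq (Units.coeHom_injective (M := Ω)) ?_)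
  · rwa [(Units.map_injective (f := (σ : L →* Ω)) σ.injective).isOfFinOrder_iff]
  · intro j hj
    rw [AlgHom.card] at hj
    simpa [Algebra.norm_eq_prod_embeddings] using congrArg (algebraMap K Ω) (h j hj)

theorem norm_algebraMap_sub_eq_eval_minpoly_pow {K L : Type*} [Field K] [Field L] [Algebra K L]
    [FiniteDimensional K L] (t : K) (x : L) :
    Algebra.norm K (algebraMap K L t - x) = (minpoly K x).eval t ^ Module.finrank K⟮x⟯ L := by
  let pb := IntermediateField.adjoin.powerBasis (Algebra.IsIntegral.isIntegral (R := K) x)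
  have hgen : pb.gen = IntermediateField.AdjoinSimple.gen K x :=
    IntermediateField.adjoin.powerBasis_gen _
  have hcharpoly : (Algebra.lmul K K⟮x⟯ pb.gen).charpoly = minpoly K x := by
    rw [← LinearMap.charpoly_toMatrix _ pb.basis]
    exact (charpoly_leftMulMatrix pb).trans (by rw [hgen, IntermediateField.minpoly_gen])
  calc
    Algebra.norm K (algebraMap K L t - x)
      = Algebra.norm K (algebraMap K⟮x⟯ L (algebraMap K K⟮x⟯ t - pb.gen)) := by
        rw [hgen]; simp
    _ = Algebra.norm K (algebraMap K K⟮x⟯ t - pb.gen) ^ Module.finrank K⟮x⟯ L := by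
        rw [← Algebra.norm_norm (S := K⟮x⟯), Algebra.norm_algebraMap, map_pow]
    _ = (minpoly K x).eval t ^ Module.finrank K⟮x⟯ L := by
        rw [← hcharpoly, LinearMap.eval_charpoly, Algebra.norm_apply, map_sub, AlgHom.commutes]

section GCDDomain

variable {Z Q : Type*} [CommRing Z] [IsDomain Z] [IsGCDMonoid Z] [Field Q] [Algebra Z Q]
  [IsFractionRing Z Q]

variable (Z) in
theorem exists_isPrimitive_map_eq_C_leadingCoeff_mul {m : Q[X]} (hm : m.Monic) :
    ∃ g : Z[X], g.IsPrimitive ∧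
      g.map (algebraMap Z Q) = C (algebraMap Z Q g.leadingCoeff) * m := by
  let _ : NormalizedGCDMonoid Z := Nonempty.some inferInstance
  set h := IsLocalization.integerNormalization (nonZeroDivisors Z) m with hh
  obtain ⟨d, -, hd⟩ := IsLocalization.integerNormalization_spec (nonZeroDivisors Z) m
  have hcontent : algebraMap Z Q h.content ≠ 0 := by
    simpa [content_eq_zero_iff, hh, IsFractionRing.integerNormalization_eq_zero_iff]
      using hm.ne_zero
  have hscalar : ∃ u : Q, h.primPart.map (algebraMap Z Q) = C u * m := by
    refine ⟨(algebraMap Z Q h.content)⁻¹ * algebraMap Z Q d,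
      mul_left_cancel₀ (C_ne_zero.2 hcontent) ?_⟩
    calc
      C (algebraMap Z Q h.content) * h.primPart.map (algebraMap Z Q)
        = h.map (algebraMap Z Q) := by
          conv_rhs => rw [h.eq_C_content_mul_primPart, Polynomial.map_mul, map_C]
      _ = C (algebraMap Z Q d) * m := by rw [hd, ← algebraMap_smul Q d m, smul_eq_C_mul]
      _ = _ := by rw [← mul_assoc, ← C_mul, mul_inv_cancel_left₀ hcontent]
  obtain ⟨u, hu⟩ := hscalar
  refine ⟨h.primPart, h.isPrimitive_primPart, ?_⟩
  rw [← leadingCoeff_map_of_injective (IsFractionRing.injective Z Q), hu, leadingCoeff_mul,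
    leadingCoeff_C, hm.leadingCoeff, mul_one]

theorem dvd_expand_of_map_dvd_minpoly {S : Type*} [Field S] [Algebra Q S] {g h : Z[X]} {b : S}
    {p : ℕ} (hg : g.IsPrimitive) (hgb : g.map (algebraMap Z Q) ∣ minpoly Q b)
    (hh : aeval (b ^ p) (h.map (algebraMap Z Q)) = 0) : g ∣ expand Z p h := by
  refine hg.dvd_of_fraction_map_dvd_fraction_map (K := Q) (hgb.trans (minpoly.dvd Q b ?_))
  rwa [map_expand, expand_aeval]

end GCDDomain

theorem isPrimitive_expand {R : Type*} [CommSemiring R] {f : R[X]} (hf : f.IsPrimitive) {n : ℕ}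
    (hn : 0 < n) : (expand R n f).IsPrimitive := by
  intro r hr
  refine hf r ?_
  rw [C_dvd_iff_dvd_coeff] at hr ⊢
  exact fun i ↦ coeff_expand_mul hn f i ▸ hr (i * n)

theorem finite_setOf_dvd {M : Type*} [CommMonoidWithZero M] [UniqueFactorizationMonoid M]
    [Finite Mˣ] {c : M} (hc : c ≠ 0) : {d : M | d ∣ c}.Finite :=
  let _ : Fintype Mˣ := Fintype.ofFinite _
  Set.finite_coe_iff.1 (@Finite.of_fintype _ (UniqueFactorizationMonoid.fintypeSubtypeDvd c hc))

theorem finite_setOf_norm_one_sub_of_pow_eq (Z Q : Type*) {K : Type*} [CommRing Z] [IsDomain Z]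
    [UniqueFactorizationMonoid Z] [Finite Zˣ] [Field Q] [Algebra Z Q] [IsFractionRing Z Q]
    [Field K] [Algebra Q K] [FiniteDimensional Q K] {a : K} (ha : a ≠ 1) :
    {N : Q | ∃ (b : K) (p : ℕ), b ^ p = a ∧ Algebra.norm Q (1 - b) = N}.Finite := by
  have hmonic (x : K) : (minpoly Q x).Monic := minpoly.monic (Algebra.IsIntegral.isIntegral x)
  have hlead {g : Z[X]} (hg : g.IsPrimitive) : algebraMap Z Q g.leadingCoeff ≠ 0 := by
    simpa using hg.ne_zero
  have heval {g : Z[X]} {x : K}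
      (hgx : g.map (algebraMap Z Q) = C (algebraMap Z Q g.leadingCoeff) * minpoly Q x) :
      algebraMap Z Q (g.eval 1) = algebraMap Z Q g.leadingCoeff * (minpoly Q x).eval 1 := by
    rw [← eval_one_map, hgx, eval_mul, eval_C]
  obtain ⟨h, hprim, hmap⟩ := exists_isPrimitive_map_eq_C_leadingCoeff_mul Z (hmonic a)
  have heval_ne : h.eval 1 ≠ 0 := by
    intro hzero
    have hroot : (minpoly Q a).IsRoot 1 := by simpa [hzero, hlead hprim] using heval hmap
    exact ha (by simpa using (minpoly.root (Algebra.IsIntegral.isIntegral a) hroot).symm)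
  have hlead_ne : h.leadingCoeff ≠ 0 := leadingCoeff_ne_zero.2 hprim.ne_zero
  refine (((finite_setOf_dvd heval_ne).prod ((finite_setOf_dvd hlead_ne).prod
    (Set.finite_Iic (Module.finrank Q K)))).image fun t : Z × Z × ℕ ↦
      (algebraMap Z Q t.1 / algebraMap Z Q t.2.1) ^ t.2.2).subset ?_
  rintro _ ⟨b, p, rfl, rfl⟩
  obtain ⟨g, hgprim, hgmap⟩ := exists_isPrimitive_map_eq_C_leadingCoeff_mul Z (hmonic b)
  have hdvd : g ∣ expand Z p h := by
    refine dvd_expand_of_map_dvd_minpoly (Q := Q) (b := b) hgprim ?_ (by simp [hmap])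
    rw [hgmap, (isUnit_C.2 (hlead hgprim).isUnit).mul_left_dvd]
  have hp : 0 < p := Nat.pos_of_ne_zero fun h0 ↦ ha (by rw [h0, pow_zero])
  refine ⟨(g.eval 1, g.leadingCoeff, Module.finrank Q⟮b⟯ K), ⟨?_, ?_, ?_⟩, ?_⟩
  · simpa [expand_eval] using eval_dvd (x := 1) hdvd
  · simpa [leadingCoeff_expand hp] using leadingCoeff_dvd_leadingCoeff hdvd
  · exact Module.finrank_top_le_finrank_of_isScalarTower Q Q⟮b⟯ K
  · dsimp only
    rw [← map_one (algebraMap Q K), norm_algebraMap_sub_eq_eval_minpoly_pow, heval hgmap,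
      mul_div_cancel_left₀ _ (hlead hgprim)]

theorem finite_setOf_norm_one_sub_pow_of_pow_eq (Z Q : Type*) {K : Type*} [CommRing Z] [IsDomain Z]
    [UniqueFactorizationMonoid Z] [Finite Zˣ] [Field Q] [Algebra Z Q] [IsFractionRing Z Q]
    [Field K] [Algebra Q K] [FiniteDimensional Q K] {a : K} (ha : ¬ IsOfFinOrder a) (j : ℕ) :
    {N : Q | ∃ (b : K) (p : ℕ), b ^ p = a ∧ Algebra.norm Q (1 - b ^ j) = N}.Finite := by
  rcases j.eq_zero_or_pos with rfl | hj
  · refine (Set.finite_singleton 0).subset ?_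
    rintro _ ⟨b, p, -, rfl⟩
    simp
  · have haj : a ^ j ≠ 1 := fun h ↦ ha (isOfFinOrder_iff_pow_eq_one.2 ⟨j, hj, h⟩)
    refine (finite_setOf_norm_one_sub_of_pow_eq Z Q haj).subset ?_
    rintro _ ⟨b, p, rfl, rfl⟩
    exact ⟨b ^ j, p, pow_right_comm b j p, rfl⟩

theorem finite_setOf_exists_pow_eq_of_isSeparable (Z Q : Type*) {K : Type*} [CommRing Z]
    [IsDomain Z] [UniqueFactorizationMonoid Z] [Finite Zˣ] [Field Q] [Algebra Z Q]
    [IsFractionRing Z Q] [Field K] [Algebra Q K] [FiniteDimensional Q K] [Algebra.IsSeparable Q K]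
    {a : Kˣ} (ha : ¬ IsOfFinOrder a) : {p : ℕ | ∃ b : Kˣ, b ^ p = a}.Finite := by
  let J := 2 ^ (Module.finrank Q K + 1)
  choose! root hroot using fun (p : ℕ) (hp : ∃ b : Kˣ, b ^ p = a) ↦ hp
  have hfinite (j : ℕ) := finite_setOf_norm_one_sub_pow_of_pow_eq Z Q
    (mt Units.isOfFinOrder_val.1 ha) j
  refine Set.Finite.of_injOn (f := fun p (j : Fin J) ↦ Algebra.norm Q (1 - (root p : K) ^ (j : ℕ)))
    (fun p hp ↦ ?_) (fun p hp q hq hpq ↦ ?_) (Set.Finite.pi' fun j : Fin J ↦ hfinite j)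
  · exact fun j ↦ ⟨root p, p, by rw [← Units.val_pow_eq_pow_val, hroot p hp], rfl⟩
  · have hnot : ¬ IsOfFinOrder (root p) := fun hfin ↦ ha (hroot p hp ▸ hfin.pow)
    exact eq_of_norm_one_sub_pow_eq hnot ((hroot p hp).trans (hroot q hq).symm)
      fun j hj ↦ congrFun hpq ⟨j, hj⟩

theorem finite_setOf_exists_pow_eq (Z Q : Type*) {K : Type*} [CommRing Z] [IsDomain Z]
    [UniqueFactorizationMonoid Z] [Finite Zˣ] [Field Q] [Algebra Z Q] [IsFractionRing Z Q]
    [Field K] [Algebra Q K] [FiniteDimensional Q K] {a : K} (ha₀ : a ≠ 0) (ha : ¬ IsOfFinOrder a) :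
    {p : ℕ | ∃ b : K, b ^ p = a}.Finite := by
  let S := separableClosure Q K
  let frob : K →* S := IsPurelyInseparable.iterateFrobenius S K (ringExpChar S) le_rfl
  have hfrob : Function.Injective (Units.map frob) :=
    Units.map_injective (RingHom.injective (IsPurelyInseparable.iterateFrobenius S K _ le_rfl))
  have hfrob_a : ¬ IsOfFinOrder (Units.map frob (Units.mk0 a ha₀)) := by
    rwa [hfrob.isOfFinOrder_iff, ← Units.isOfFinOrder_val, Units.val_mk0]
  refine (finite_setOf_exists_pow_eq_of_isSeparable Z Q hfrob_a).subset ?_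
  rintro p ⟨b, rfl⟩
  have hp : p ≠ 0 := by
    rintro rfl
    simp at ha
  exact ⟨Units.map frob (Units.mk0 b (ne_zero_pow hp ha₀)), by ext; simp⟩

theorem minpoly_dvd_cyclotomic_orderOf {K L : Type*} [Field K] [Field L] [Algebra K L] {a : L}
    (ha : IsOfFinOrder a) : minpoly K a ∣ cyclotomic (orderOf a) K := by
  refine minpoly.dvd K a ?_
  rw [aeval_def, eval₂_eq_eval_map, map_cyclotomic]
  exact (IsPrimitiveRoot.orderOf a).isRoot_cyclotomic ha.orderOf_pos

theorem irreducible_minpoly_comp_X_pow {K L : Type*} [Field K] [Field L] [Algebra K L] {a : L}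
    (ha : IsIntegral K a) {p : ℕ} (hp : p.Prime) (hpow : ∀ b : L, b ^ p ≠ a) :
    Irreducible ((minpoly K a).comp (X ^ p)) := by
  refine irreducible_comp (minpoly.monic ha) (monic_X_pow p) (minpoly.irreducible ha) ?_
  intro E _ _ x hx
  rw [Polynomial.map_pow, map_X]
  refine X_pow_sub_C_irreducible_of_prime hp fun b hb ↦ ?_
  have hroot : aeval a (minpoly K x) = 0 := by rw [hx, minpoly.aeval]
  have hxint : IsIntegral K x := minpoly.ne_zero_iff.1 (hx ▸ minpoly.ne_zero ha)
  let φ : K⟮x⟯ →ₐ[K] L := (IntermediateField.adjoin.powerBasis hxint).lift a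
    (by simpa [IntermediateField.minpoly_gen] using hroot)
  have hφ : φ (IntermediateField.AdjoinSimple.gen K x) = a :=
    (IntermediateField.adjoin.powerBasis hxint).lift_gen a _
  exact hpow (φ b) (by rw [← map_pow, hb, hφ])

theorem irreducible_comp_X_pow_of_forall_pow_ne {Z Q L : Type*} [CommRing Z] [IsDomain Z]
    [IsGCDMonoid Z] [Field Q] [Algebra Z Q] [IsFractionRing Z Q] [Field L] [Algebra Q L] {f : Z[X]}
    (hf : Irreducible f) (hdeg : f.natDegree ≠ 0) {a : L}
    (ha : aeval a (f.map (algebraMap Z Q)) = 0) {p : ℕ} (hp : p.Prime)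
    (hpow : ∀ b : L, b ^ p ≠ a) : Irreducible (f.comp (X ^ p)) := by
  have hprim : f.IsPrimitive := hf.isPrimitive hdeg
  have hirr : Irreducible (f.map (algebraMap Z Q)) :=
    hprim.irreducible_iff_irreducible_map_fraction_map.1 hf
  have hlead : (f.map (algebraMap Z Q)).leadingCoeff⁻¹ ≠ 0 :=
    inv_ne_zero (leadingCoeff_ne_zero.2 hirr.ne_zero)
  have hcomp_prim : (f.comp (X ^ p)).IsPrimitive := by
    rw [← expand_eq_comp_X_pow]
    exact isPrimitive_expand hprim hp.pos
  have hint : IsIntegral Q a := IsAlgebraic.isIntegral ⟨_, hirr.ne_zero, ha⟩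
  have hminpoly := irreducible_minpoly_comp_X_pow hint hp hpow
  rw [← minpoly.eq_of_irreducible hirr ha, mul_comp, C_comp,
    irreducible_mul_isUnit (isUnit_C.2 hlead.isUnit)] at hminpoly
  rwa [hcomp_prim.irreducible_iff_irreducible_map_fraction_map (K := Q), map_comp,
    Polynomial.map_pow, map_X]

theorem stmt15 {Z Q : Type*} [CommRing Z] [IsDomain Z] [UniqueFactorizationMonoid Z]
    [Field Q] [Algebra Z Q] [IsFractionRing Z Q] [Finite Zˣ]
    (f : Polynomial Z) (hf : Irreducible f) (hdeg : 0 < f.natDegree)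
    (hb : f.coeff 0 ≠ 0)
    (hcyc : ∀ k : ℕ, 1 ≤ k → ¬ f.map (algebraMap Z Q) ∣ Polynomial.cyclotomic k Q) :
    {p : ℕ | p.Prime ∧ ¬ Irreducible (f.comp (X ^ p))}.Finite := by
  let F := f.map (algebraMap Z Q)
  have hF : Irreducible F :=
    (hf.isPrimitive hdeg.ne').irreducible_iff_irreducible_map_fraction_map.1 hf
  have : Fact (Irreducible F) := ⟨hF⟩
  have : FiniteDimensional Q (AdjoinRoot F) := (AdjoinRoot.powerBasis hF.ne_zero).finite
  let a := AdjoinRoot.root F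
  have ha : aeval a F = 0 := by simp [a]
  have ha_ne_zero : a ≠ 0 := by
    intro h
    rw [h, ← coeff_zero_eq_aeval_zero'] at ha
    simp [F, hb] at ha
  have ha_order : ¬ IsOfFinOrder a := fun hfin ↦
    hcyc (orderOf a) hfin.orderOf_pos <|
      (Dvd.intro _ (minpoly.eq_of_irreducible hF ha)).trans (minpoly_dvd_cyclotomic_orderOf hfin)
  refine (finite_setOf_exists_pow_eq Z Q ha_ne_zero ha_order).subset ?_
  rintro p ⟨hp, hreducible⟩
  by_contra hpow
  exact hreducible <| irreducible_comp_X_pow_of_forall_pow_ne hf hdeg.ne' ha hp (not_exists.1 hpow)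
end

section
/- Let Z = ℤ[i] be the ring of Gaussian integers and let f ∈ Z[X] be a monic polynomial of positive degree that is irreducible in Z[X] and whose constant coefficient equals 8i. Then for every positive integer n that is relatively prime to 6, f(X^n) is irreducible in Z[X]. -/
open Polynomial

/-!
Let `x` be a root of an irreducible `f` over a field `K`. By the tower law, `f(X ^ n)` is
irreducible as soon as `X ^ n - x` is irreducible over `K(x)`, which for odd `n` means that `x` is
not a `p`-th power there for any prime `p ∣ n`. If it were, then taking norms down to `K` would make
`± f(0)`, hence also `f(0)` since `p` is odd, a `p`-th power in `K`. When `K` is the fraction field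
of an integrally closed domain containing `f(0)`, such a `p`-th root of `f(0)` lies in that domain.
Finally, `8i` has norm `2 ^ 6`, so it is a `p`-th power in `ℤ[i]` only if `p ∣ 6`.
-/

theorem norm_adjoinSimple_gen {K L : Type*} [Field K] [Field L] [Algebra K L] {x : L}
    (hx : IsIntegral K x) :
    Algebra.norm K (IntermediateField.AdjoinSimple.gen K x) =
      (-1) ^ (minpoly K x).natDegree * (minpoly K x).coeff 0 := by
  rw [← IntermediateField.adjoin.powerBasis_gen hx,
    Algebra.PowerBasis.norm_gen_eq_coeff_zero_minpoly, IntermediateField.adjoin.powerBasis_gen hx,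
    IntermediateField.minpoly_gen, IntermediateField.adjoin.powerBasis_dim]

theorem exists_pow_eq_of_pow_eq_neg_one_pow_mul {M : Type*} [CommMonoid M]
    [HasDistribNeg M] {p : ℕ} (hp : Odd p) {m : ℕ} {a b : M} (h : b ^ p = (-1) ^ m * a) :
    ∃ c : M, c ^ p = a := by
  refine ⟨(-1) ^ m * b, ?_⟩
  calc ((-1) ^ m * b) ^ p = (-1) ^ m * b ^ p := by
        rw [mul_pow, pow_right_comm, hp.neg_one_pow]
    _ = a := by rw [h, ← mul_assoc, ← mul_pow, neg_one_mul, neg_neg, one_pow, one_mul]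

theorem irreducible_comp_X_pow_of_odd {K : Type*} [Field K] {f : K[X]} (hmonic : f.Monic)
    (hf : Irreducible f) {n : ℕ} (hn : Odd n)
    (hpow : ∀ p : ℕ, p.Prime → p ∣ n → ∀ b : K, b ^ p ≠ f.coeff 0) :
    Irreducible (f.comp (X ^ n)) := by
  refine irreducible_comp hmonic (monic_X_pow n) hf fun E _ _ x hx ↦ ?_
  rw [Polynomial.map_pow, map_X]
  refine X_pow_sub_C_irreducible_of_odd hn fun p hp hpn b hb ↦ ?_
  have hx_int : IsIntegral K x := minpoly.ne_zero_iff.mp (hx ▸ hf.ne_zero)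
  have hnorm : Algebra.norm K b ^ p = (-1) ^ f.natDegree * f.coeff 0 := by
    rw [← map_pow, hb, norm_adjoinSimple_gen hx_int, hx]
  obtain ⟨c, hc⟩ := exists_pow_eq_of_pow_eq_neg_one_pow_mul (hn.of_dvd_nat hpn) hnorm
  exact hpow p hp hpn c hc

theorem irreducible_comp_X_pow_of_odd_of_isIntegrallyClosed {R : Type*} [CommRing R] [IsDomain R]
    [IsIntegrallyClosed R] {f : R[X]} (hmonic : f.Monic) (hf : Irreducible f) {n : ℕ} (hn : Odd n)
    (hpow : ∀ p : ℕ, p.Prime → p ∣ n → ∀ b : R, b ^ p ≠ f.coeff 0) :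
    Irreducible (f.comp (X ^ n)) := by
  let K := FractionRing R
  have hcomp : (f.comp (X ^ n)).Monic :=
    hmonic.comp (monic_X_pow n) (by rw [natDegree_X_pow]; exact hn.pos.ne')
  rw [hcomp.irreducible_iff_irreducible_map_fraction_map (K := K), Polynomial.map_comp,
    Polynomial.map_pow, map_X]
  refine irreducible_comp_X_pow_of_odd (hmonic.map _)
    (hmonic.irreducible_iff_irreducible_map_fraction_map.mp hf) hn fun p hp hpn b hb ↦ ?_
  rw [coeff_map] at hb
  obtain ⟨c, rfl⟩ := IsIntegrallyClosed.exists_algebraMap_eq_of_isIntegral_pow (R := R) hp.pos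
    (hb ▸ isIntegral_algebraMap)
  exact hpow p hp hpn c (IsFractionRing.injective R K (by rw [map_pow, hb]))

theorem dvd_of_pow_eq_prime_pow {q : ℕ} (hq : q.Prime) {a n k : ℕ} (h : a ^ n = q ^ k) :
    n ∣ k :=
  ⟨a.factorization q, by simpa [hq.factorization_self] using
    (congrArg (fun m ↦ m.factorization q) h).symm⟩

theorem dvd_of_natAbs_norm_pow_eq_prime_pow {d : ℤ} {q : ℕ} (hq : q.Prime) {y : ℤ√d} {n k : ℕ}
    (h : (y ^ n).norm.natAbs = q ^ k) : n ∣ k := by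
  have hnorm : (y ^ n).norm = y.norm ^ n := map_pow Zsqrtd.normMonoidHom y n
  rw [hnorm, Int.natAbs_pow] at h
  exact dvd_of_pow_eq_prime_pow hq h

theorem dvd_six_of_pow_eq_eight_mul_sqrtd {y : GaussianInt} {n : ℕ}
    (h : y ^ n = 8 * Zsqrtd.sqrtd) : n ∣ 6 :=
  dvd_of_natAbs_norm_pow_eq_prime_pow Nat.prime_two (by rw [h]; decide)

theorem stmt17 (f : Polynomial GaussianInt) (hmonic : f.Monic) (hdeg : 0 < f.natDegree)
    (hf : Irreducible f) (hconst : f.coeff 0 = 8 * Zsqrtd.sqrtd)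
    (n : ℕ) (hn : 0 < n) (hcop : Nat.Coprime n 6) :
    Irreducible (f.comp (X ^ n)) := by
  have hodd : Odd n := Nat.Coprime.odd_of_right (hcop.coprime_dvd_right (by norm_num : 2 ∣ 6))
  refine irreducible_comp_X_pow_of_odd_of_isIntegrallyClosed hmonic hf hodd fun p hp hpn y hy ↦ ?_
  have hp6 : p ∣ 6 := dvd_six_of_pow_eq_eight_mul_sqrtd (hy.trans hconst)
  exact Nat.not_coprime_of_dvd_of_dvd hp.one_lt hpn hp6 hcop
end

section
/- For every integer m ≥ 2 and every prime number p, there is no integer c with c^p = m!, and there is no integer c with c^p = −m!. In other words, neither m! nor −m! is a p-th power in ℤ for any prime p. -/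
/-!
By Bertrand's postulate there is a prime `q` with `q ≤ m < 2 * q`. By Legendre's formula it divides
`m!` exactly once, whereas the multiplicity of `q` in an `n`-th power is a multiple of `n`.
-/

open scoped Nat

theorem factorization_factorial_of_lt_sq {q m : ℕ} (hq : q.Prime) (hm : m < q ^ 2) :
    (m !).factorization q = m / q := by
  have hlog : Nat.log q m < 2 := Nat.log_lt_of_lt_pow' two_ne_zero hm
  simp [Nat.factorization_factorial hq hlog]

theorem factorization_factorial_eq_one {q m : ℕ} (hq : q.Prime) (hqm : q ≤ m) (hmq : m < 2 * q) :
    (m !).factorization q = 1 := by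
  have hm : m < q ^ 2 := calc
    m < 2 * q := hmq
    _ ≤ q * q := Nat.mul_le_mul_right q hq.two_le
    _ = q ^ 2 := (sq q).symm
  rw [factorization_factorial_of_lt_sq hq hm]
  exact Nat.div_eq_of_lt_le (by simpa using hqm) hmq

theorem exists_prime_le_and_lt_two_mul {m : ℕ} (hm : 2 ≤ m) :
    ∃ q : ℕ, q.Prime ∧ q ≤ m ∧ m < 2 * q := by
  obtain ⟨q, hq, hlt, hle⟩ := Nat.exists_prime_lt_and_le_two_mul (m / 2) (by lia)
  exact ⟨q, hq, by lia, by lia⟩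

theorem eq_one_of_factorization_pow_eq_one {c n q : ℕ} (h : (c ^ n).factorization q = 1) :
    n = 1 := by
  rw [Nat.factorization_pow, Finsupp.smul_apply, smul_eq_mul] at h
  exact Nat.eq_one_of_mul_eq_one_right h

theorem pow_ne_factorial {m n : ℕ} (hm : 2 ≤ m) (hn : n ≠ 1) (c : ℕ) : c ^ n ≠ m ! := by
  intro hc
  obtain ⟨q, hq, hqm, hmq⟩ := exists_prime_le_and_lt_two_mul hm
  have hfac : (c ^ n).factorization q = 1 := hc ▸ factorization_factorial_eq_one hq hqm hmq
  exact hn (eq_one_of_factorization_pow_eq_one hfac)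

theorem stmt18_general (m : ℕ) (hm : 2 ≤ m) (n : ℕ) (hn : n ≠ 1) :
    (¬ ∃ c : ℤ, c ^ n = (m ! : ℤ)) ∧ (¬ ∃ c : ℤ, c ^ n = -(m ! : ℤ)) := by
  have natAbs_pow_ne (c : ℤ) : (c ^ n).natAbs ≠ m ! :=
    Int.natAbs_pow c n ▸ pow_ne_factorial hm hn c.natAbs
  constructor
  · rintro ⟨c, hc⟩
    exact natAbs_pow_ne c (Int.natAbs_eq_iff.mpr (.inl hc))
  · rintro ⟨c, hc⟩
    exact natAbs_pow_ne c (Int.natAbs_eq_iff.mpr (.inr hc))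

theorem stmt18 (m : ℕ) (hm : 2 ≤ m) (p : ℕ) (hp : p.Prime) :
    (¬ ∃ c : ℤ, c ^ p = (m.factorial : ℤ)) ∧ (¬ ∃ c : ℤ, c ^ p = -(m.factorial : ℤ)) :=
  stmt18_general m hm p hp.ne_one
end
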